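/- For every integer m ≥ 1 and every real θ > 0, Σ_{k=1}^{m} C(m,k;1/2)·θ^k = e^{θ}·θ^{2m}·∫_0^∞ x^m·e^{−x·θ²}·(1/(2√π))·x^{−3/2}·exp(−1/(4x)) dx. -/

import Mathlib

open MeasureTheory

/-- Rising factorial `(x)_(n) = x (x+1) ⋯ (x+n-1)`, with `(x)_(0) = 1`. -/
def risingFactorial (x : ℝ) : ℕ → ℝ
  | 0 => 1
  | n + 1 => risingFactorial x n * (x + n)

/-- Generalized factorial coefficient
`C(m,k;σ) = (1/k!) ∑_{i=0}^k (-1)^i binom(k,i) (-iσ)_(m)`. -/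
noncomputable def genFactCoeff (m k : ℕ) (σ : ℝ) : ℝ :=
  (1 / (k.factorial : ℝ)) *
    ∑ i ∈ Finset.range (k + 1),
      (-1 : ℝ) ^ i * (k.choose i : ℝ) * risingFactorial (-(i : ℝ) * σ) m

open Filter Topology

lemma gfc_rec (m k : ℕ) : genFactCoeff (m + 1) (k + 1) (1 / 2) =
    ((m : ℝ) - ((k : ℝ) + 1) / 2) * genFactCoeff m (k + 1) (1 / 2)
      + genFactCoeff m k (1 / 2) / 2 := by
  have hS : ∑ i ∈ Finset.range (k + 1 + 1), (-1 : ℝ) ^ i * ((k + 1).choose i : ℝ) *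
        risingFactorial (-(i : ℝ) * (1 / 2)) (m + 1) =
      ((m : ℝ) - ((k : ℝ) + 1) / 2) * ∑ i ∈ Finset.range (k + 1 + 1),
        (-1 : ℝ) ^ i * ((k + 1).choose i : ℝ) * risingFactorial (-(i : ℝ) * (1 / 2)) m
      + ((k : ℝ) + 1) / 2 * ∑ i ∈ Finset.range (k + 1),
        (-1 : ℝ) ^ i * (k.choose i : ℝ) * risingFactorial (-(i : ℝ) * (1 / 2)) m := by
    have h2 : ∑ i ∈ Finset.range (k + 1),
        (-1 : ℝ) ^ i * (k.choose i : ℝ) * risingFactorial (-(i : ℝ) * (1 / 2)) m =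
        ∑ i ∈ Finset.range (k + 1 + 1),
        (-1 : ℝ) ^ i * (k.choose i : ℝ) * risingFactorial (-(i : ℝ) * (1 / 2)) m := by
      rw [Finset.sum_range_succ _ (k + 1)]
      simp
    rw [h2, Finset.mul_sum, Finset.mul_sum, ← Finset.sum_add_distrib]
    apply Finset.sum_congr rfl
    intro i hi
    have hi' : i ≤ k + 1 := by
      have := Finset.mem_range.mp hi
      omega
    have hc : (k.choose i : ℝ) * ((k : ℝ) + 1) = ((k + 1).choose i : ℝ) * ((k : ℝ) + 1 - i) := by
      have := Nat.choose_mul_succ_eq k i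
      have h3 : ((k.choose i * (k + 1) : ℕ) : ℝ) = (((k + 1).choose i * (k + 1 - i) : ℕ) : ℝ) := by
        rw [this]
      push_cast [Nat.cast_sub hi'] at h3
      exact h3
    simp only [risingFactorial]
    linear_combination (-(1 / 2) * (-1 : ℝ) ^ i * risingFactorial (-(i : ℝ) * (1 / 2)) m) * hc
  unfold genFactCoeff
  rw [hS, Nat.factorial_succ]
  have hk : (k.factorial : ℝ) ≠ 0 := by positivity
  have hk1 : (k : ℝ) + 1 ≠ 0 := by positivity
  push_cast
  field_simp

lemma rf_zero (m : ℕ) : risingFactorial 0 (m + 1) = 0 := by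
  induction m with
  | zero => simp [risingFactorial]
  | succ n ih => rw [risingFactorial, ih]; simp

lemma gfc_succ_zero (m : ℕ) : genFactCoeff (m + 1) 0 (1 / 2) = 0 := by
  simp [genFactCoeff, rf_zero]

lemma gfc_zero_zero : genFactCoeff 0 0 (1 / 2) = 1 := by
  simp [genFactCoeff, risingFactorial]

lemma gfc_zero_succ (k : ℕ) : genFactCoeff 0 (k + 1) (1 / 2) = 0 := by
  have h := Int.alternating_sum_range_choose_of_ne (n := k + 1) (by omega)
  have h' : ((∑ m ∈ Finset.range (k + 1 + 1), ((-1) ^ m * (k + 1).choose m : ℤ) : ℤ) : ℝ) = 0 := by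
    rw [h]; simp
  push_cast at h'
  simp only [genFactCoeff, risingFactorial, mul_one]
  rw [h', mul_zero]

lemma gfc_big (m k : ℕ) (h : m < k) : genFactCoeff m k (1 / 2) = 0 := by
  induction m generalizing k with
  | zero =>
    obtain ⟨k, rfl⟩ : ∃ j, k = j + 1 := ⟨k - 1, by omega⟩
    exact gfc_zero_succ k
  | succ m ih =>
    obtain ⟨k, rfl⟩ : ∃ j, k = j + 1 := ⟨k - 1, by omega⟩
    rw [gfc_rec, ih _ (by omega), ih _ (by omega)]
    simp

lemma gfc_Q (m k : ℕ) : 2 * ((k : ℝ) + 1) * genFactCoeff (m + 1) (k + 2) (1 / 2) =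
    2 * genFactCoeff (m + 1) (k + 1) (1 / 2) - genFactCoeff m k (1 / 2) := by
  induction m generalizing k with
  | zero =>
    rw [gfc_rec 0 (k + 1), gfc_rec 0 k, gfc_zero_succ, gfc_zero_succ]
    push_cast
    ring
  | succ m ih =>
    rw [gfc_rec (m + 1) (k + 1), gfc_rec (m + 1) k]
    have h1 := ih k
    have key : (k : ℝ) * genFactCoeff (m + 1) (k + 1) (1 / 2) =
        ((m : ℝ) - k / 2) * genFactCoeff m k (1 / 2) := by
      cases k with
      | zero =>
        cases m with
        | zero => simp
        | succ n => rw [gfc_succ_zero]; simp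
      | succ j =>
        have h2 := ih j
        have h3 := gfc_rec m j
        push_cast at *
        linear_combination h2 / 2 + h3
    push_cast at *
    linear_combination ((m : ℝ) - k / 2) * h1 + key

lemma gfc_three (m k : ℕ) : genFactCoeff (m + 2) (k + 2) (1 / 2) =
    ((m : ℝ) + 1 / 2) * genFactCoeff (m + 1) (k + 2) (1 / 2)
      + genFactCoeff m k (1 / 2) / 4 := by
  have h1 := gfc_rec (m + 1) (k + 1)
  have h2 := gfc_Q m k
  push_cast at *
  linear_combination h1 - h2 / 4

noncomputable def genP (θ : ℝ) (m : ℕ) : ℝ :=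
  ∑ k ∈ Finset.range (m + 1), genFactCoeff m k (1 / 2) * θ ^ k

lemma genP_ext (θ : ℝ) (m N : ℕ) (h : m + 1 ≤ N) :
    genP θ m = ∑ k ∈ Finset.range N, genFactCoeff m k (1 / 2) * θ ^ k := by
  unfold genP
  apply Finset.sum_subset
  · intro x hx
    simp only [Finset.mem_range] at *
    omega
  · intro x _ hx
    simp only [Finset.mem_range] at hx
    rw [gfc_big _ _ (by omega), zero_mul]

lemma genP_zero (θ : ℝ) : genP θ 0 = 1 := by
  simp only [genP, zero_add, Finset.sum_range_one, gfc_zero_zero]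
  simp

lemma genP_one (θ : ℝ) : genP θ 1 = θ / 2 := by
  unfold genP
  rw [Finset.sum_range_succ, Finset.sum_range_one, gfc_succ_zero 0, gfc_rec 0 0, gfc_zero_zero,
    gfc_zero_succ]
  ring

lemma genP_rec (θ : ℝ) (m : ℕ) : genP θ (m + 2) =
    ((m : ℝ) + 1 / 2) * genP θ (m + 1) + θ ^ 2 / 4 * genP θ m := by
  rw [genP_ext θ (m + 2) (m + 1 + 1 + 1) le_rfl, genP_ext θ (m + 1) (m + 1 + 1 + 1) (by omega)]
  unfold genP
  rw [Finset.sum_range_succ' _ (m + 1 + 1), Finset.sum_range_succ' _ (m + 1),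
    Finset.sum_range_succ' _ (m + 1 + 1), Finset.sum_range_succ' _ (m + 1)]
  have h1 := gfc_rec (m + 1) 0
  rw [gfc_succ_zero] at h1
  have h0 := gfc_succ_zero m
  have h0' := gfc_succ_zero (m + 1)
  have hs : ∑ k ∈ Finset.range (m + 1), genFactCoeff (m + 2) (k + 1 + 1) (1 / 2) * θ ^ (k + 1 + 1)
      = ((m : ℝ) + 1 / 2) *
        ∑ k ∈ Finset.range (m + 1), genFactCoeff (m + 1) (k + 1 + 1) (1 / 2) * θ ^ (k + 1 + 1)
      + θ ^ 2 / 4 * ∑ k ∈ Finset.range (m + 1), genFactCoeff m k (1 / 2) * θ ^ k := by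
    rw [Finset.mul_sum, Finset.mul_sum, ← Finset.sum_add_distrib]
    apply Finset.sum_congr rfl
    intro k _
    have h := gfc_three m k
    linear_combination θ ^ (k + 2) * h
  push_cast at *
  simp only [zero_add, pow_zero, pow_one, mul_one] at *
  rw [hs, h0, h0', h1]
  ring

/-- The integrand. -/
noncomputable def gI (θ : ℝ) (m : ℕ) (x : ℝ) : ℝ :=
  x ^ m * Real.exp (-x * θ ^ 2) *
    ((1 / (2 * Real.sqrt Real.pi)) * x ^ (-(3 / 2) : ℝ) * Real.exp (-1 / (4 * x)))

lemma ftc_Ioi {F f : ℝ → ℝ} {a b : ℝ} (hd : ∀ x ∈ Set.Ioi (0 : ℝ), HasDerivAt F (f x) x)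
    (hf : IntegrableOn f (Set.Ioi 0)) (h0 : Tendsto F (𝓝[>] 0) (𝓝 a))
    (ht : Tendsto F atTop (𝓝 b)) : ∫ x in Set.Ioi (0 : ℝ), f x = b - a := by
  have h := integral_Ioi_of_hasDerivAt_of_tendsto (f := Function.update F 0 a) (f' := f) (a := 0)
    (m := b) ?_ ?_ hf ?_
  · simpa using h
  · rw [continuousWithinAt_update_same]
    simpa using h0
  · intro x hx
    apply (hd x hx).congr_of_eventuallyEq
    filter_upwards [Ioi_mem_nhds hx] with y hy
    rw [Function.update_of_ne (ne_of_gt hy)]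
  · apply ht.congr'
    filter_upwards [Ioi_mem_atTop (0 : ℝ)] with y hy
    rw [Function.update_of_ne (ne_of_gt hy)]

lemma exp_bound {x : ℝ} (hx : 0 < x) : Real.exp (-1 / (4 * x)) ≤ 4 * x := by
  have h1 : 1 / (4 * x) ≤ Real.exp (1 / (4 * x)) := by
    have := Real.add_one_le_exp (1 / (4 * x))
    linarith
  have h2 : Real.exp (-1 / (4 * x)) = (Real.exp (1 / (4 * x)))⁻¹ := by
    rw [← Real.exp_neg]
    ring_nf
  rw [h2]
  have := inv_anti₀ (by positivity) h1
  simpa using this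

lemma gI_bound {θ : ℝ} (m : ℕ) {x : ℝ} (hx : 0 < x) :
    |gI θ m x| ≤ (1 / (2 * Real.sqrt Real.pi)) * 4 *
      (x ^ ((m : ℝ) - 1 / 2) * Real.exp (-θ ^ 2 * x)) := by
  have h0 : 0 ≤ gI θ m x := by
    unfold gI
    positivity
  rw [abs_of_nonneg h0]
  have hp : x ^ ((m : ℝ) - 1 / 2) = x ^ m * x ^ (-(3 / 2) : ℝ) * x := by
    rw [← Real.rpow_natCast, ← Real.rpow_add hx, ← Real.rpow_add_one hx.ne']
    congr 1
    ring
  rw [hp]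
  unfold gI
  have := exp_bound hx
  calc _ ≤ x ^ m * Real.exp (-x * θ ^ 2) *
    ((1 / (2 * Real.sqrt Real.pi)) * x ^ (-(3 / 2) : ℝ) * (4 * x)) := by gcongr
    _ = _ := by
      rw [show -x * θ ^ 2 = -θ ^ 2 * x by ring]
      ring

lemma gI_int {θ : ℝ} (hθ : 0 < θ) (m : ℕ) : IntegrableOn (gI θ m) (Set.Ioi 0) := by
  have h := integrableOn_rpow_mul_exp_neg_mul_rpow (p := 1) (s := (m : ℝ) - 1 / 2) (b := θ ^ 2)
    (by have : (0 : ℝ) ≤ m := by positivity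
        linarith) one_pos (by positivity)
  simp only [Real.rpow_one] at h
  refine Integrable.mono' (h.const_mul ((1 / (2 * Real.sqrt Real.pi)) * 4)) ?_ ?_
  · apply Measurable.aestronglyMeasurable
    unfold gI
    fun_prop
  · rw [ae_restrict_iff' measurableSet_Ioi]
    filter_upwards with x hx
    exact gI_bound m hx

lemma gI_deriv (θ : ℝ) (m : ℕ) {x : ℝ} (hx : 0 < x) : HasDerivAt (gI θ (m + 2))
    (((m : ℝ) + 1 / 2) * gI θ (m + 1) x - θ ^ 2 * gI θ (m + 2) x + gI θ m x / 4) x := by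
  have h1 := hasDerivAt_pow (m + 2) x
  have h2 := (((hasDerivAt_id x).neg).mul_const (θ ^ 2)).exp
  have h3 := (Real.hasDerivAt_rpow_const (p := (-(3 / 2) : ℝ)) (Or.inl hx.ne')).const_mul
    (1 / (2 * Real.sqrt Real.pi))
  have h4 := ((((hasDerivAt_id x).const_mul 4).inv (by simpa using hx.ne')).const_mul (-1)).exp
  have h := (h1.mul h2).mul (h3.mul h4)
  refine (h.congr_deriv ?_).congr_of_eventuallyEq ?_
  · simp only [id, gI, Pi.mul_apply, Pi.neg_apply, Pi.inv_apply]
    rw [Real.rpow_sub_one hx.ne', ← div_eq_mul_inv]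
    have hx' := hx.ne'
    have hpi : Real.sqrt Real.pi ≠ 0 := by positivity
    push_cast
    try simp only [Nat.add_sub_cancel, show m + 2 - 1 = m + 1 from rfl]
    field_simp
    ring
  · filter_upwards with y
    simp only [id, gI, Pi.mul_apply, Pi.neg_apply, Pi.inv_apply, ← div_eq_mul_inv]

lemma gI_rec {θ : ℝ} (hθ : 0 < θ) (m : ℕ) :
    θ ^ 2 * ∫ x in Set.Ioi (0 : ℝ), gI θ (m + 2) x =
    ((m : ℝ) + 1 / 2) * (∫ x in Set.Ioi (0 : ℝ), gI θ (m + 1) x)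
      + (∫ x in Set.Ioi (0 : ℝ), gI θ m x) / 4 := by
  have i0 := (gI_int hθ m).div_const 4
  have i1 := (gI_int hθ (m + 1)).const_mul ((m : ℝ) + 1 / 2)
  have i2 := (gI_int hθ (m + 2)).const_mul (θ ^ 2)
  have hi : IntegrableOn (fun x => ((m : ℝ) + 1 / 2) * gI θ (m + 1) x - θ ^ 2 * gI θ (m + 2) x
      + gI θ m x / 4) (Set.Ioi 0) := (i1.sub i2).add i0
  have ht := tendsto_zero_of_hasDerivAt_of_integrableOn_Ioi (fun x hx => gI_deriv θ m hx) hi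
    (gI_int hθ (m + 2))
  have h0 : Tendsto (gI θ (m + 2)) (𝓝[>] 0) (𝓝 0) := by
    have hb : Tendsto (fun x : ℝ => (1 / (2 * Real.sqrt Real.pi)) * 4 *
      (x ^ (((m + 2 : ℕ) : ℝ) - 1 / 2) * Real.exp (-θ ^ 2 * x))) (𝓝[>] 0) (𝓝 0) := by
      have hp : (0 : ℝ) < ((m + 2 : ℕ) : ℝ) - 1 / 2 := by
        push_cast
        have : (0 : ℝ) ≤ m := by positivity
        linarith
      have hc : ContinuousAt (fun x : ℝ => (1 / (2 * Real.sqrt Real.pi)) * 4 *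
        (x ^ (((m + 2 : ℕ) : ℝ) - 1 / 2) * Real.exp (-θ ^ 2 * x))) 0 := by
        have := Real.continuousAt_rpow_const (0 : ℝ) _ (Or.inr hp.le)
        fun_prop
      have := hc.tendsto
      rw [Real.zero_rpow hp.ne'] at this
      simp only [zero_mul, mul_zero] at this
      exact this.mono_left nhdsWithin_le_nhds
    refine squeeze_zero_norm' ?_ hb
    filter_upwards [self_mem_nhdsWithin] with x hx
    exact gI_bound (m + 2) hx
  have h := ftc_Ioi (fun x hx => gI_deriv θ m hx) hi h0 ht
  have i12 : Integrable (fun x => ((m : ℝ) + 1 / 2) * gI θ (m + 1) x - θ ^ 2 * gI θ (m + 2) x)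
      (volume.restrict (Set.Ioi 0)) := i1.sub i2
  rw [integral_add i12 i0, integral_sub i1 i2, integral_const_mul, integral_const_mul,
    integral_div] at h
  linarith

/-- Antiderivative of the Gaussian. -/
noncomputable def gPhi (y : ℝ) : ℝ := ∫ t in (0 : ℝ)..y, Real.exp (-1 * t ^ 2)

lemma gPhi_deriv (y : ℝ) : HasDerivAt gPhi (Real.exp (-1 * y ^ 2)) y := by
  have hc : Continuous (fun t : ℝ => Real.exp (-1 * t ^ 2)) := by fun_prop
  exact intervalIntegral.integral_hasDerivAt_right (hc.intervalIntegrable _ _)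
    (hc.stronglyMeasurableAtFilter _ _) hc.continuousAt

lemma gPhi_top : Tendsto gPhi atTop (𝓝 (∫ t in Set.Ioi (0 : ℝ), Real.exp (-1 * t ^ 2))) :=
  intervalIntegral_tendsto_integral_Ioi 0 (integrable_exp_neg_mul_sq one_pos).integrableOn
    tendsto_id

lemma gPhi_bot : Tendsto gPhi atBot (𝓝 (-∫ t in Set.Iic (0 : ℝ), Real.exp (-1 * t ^ 2))) := by
  have h := (intervalIntegral_tendsto_integral_Iic 0
    (integrable_exp_neg_mul_sq one_pos).integrableOn tendsto_id).neg
  refine h.congr ?_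
  intro y
  rw [gPhi, intervalIntegral.integral_symm]
  simp

lemma gPhi_tot : (∫ t in Set.Ioi (0 : ℝ), Real.exp (-1 * t ^ 2))
    - (-∫ t in Set.Iic (0 : ℝ), Real.exp (-1 * t ^ 2)) = Real.sqrt Real.pi := by
  have hi := integrable_exp_neg_mul_sq (b := 1) one_pos
  have h := intervalIntegral.integral_Iic_add_Ioi (b := (0 : ℝ)) hi.integrableOn hi.integrableOn
  rw [integral_gaussian] at h
  rw [div_one] at h
  linarith

lemma base_deriv (θ ε : ℝ) (hε : ε ^ 2 = 1) {x : ℝ} (hx : 0 < x) :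
    HasDerivAt (fun x => gPhi (θ * Real.sqrt x + ε / (2 * Real.sqrt x)))
      (Real.exp (-ε * θ) * Real.sqrt Real.pi * (θ * gI θ 1 x - ε / 2 * gI θ 0 x)) x := by
  have hs : 0 < Real.sqrt x := Real.sqrt_pos.mpr hx
  have hsq : Real.sqrt x ^ 2 = x := Real.sq_sqrt hx.le
  have h1 := Real.hasDerivAt_sqrt hx.ne'
  have h2 := (h1.const_mul θ).add (((h1.const_mul 2).inv (by positivity)).const_mul ε)
  have h := (gPhi_deriv _).comp x h2
  refine (h.congr_deriv ?_).congr_of_eventuallyEq ?_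
  · have hr : x ^ (-(3 / 2) : ℝ) = 1 / (x * Real.sqrt x) := by
      rw [Real.rpow_neg hx.le, show (3 / 2 : ℝ) = 1 + 1 / 2 by norm_num, Real.rpow_add hx,
        Real.rpow_one, ← Real.sqrt_eq_rpow, one_div]
    have hpi : Real.sqrt Real.pi ≠ 0 := by positivity
    have he : Real.exp (-1 * (θ * Real.sqrt x + ε * (2 * Real.sqrt x)⁻¹) ^ 2) =
        Real.exp (-ε * θ) * (Real.exp (-x * θ ^ 2) * Real.exp (-1 / (4 * x))) := by
      rw [← Real.exp_add, ← Real.exp_add]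
      congr 1
      rw [← hsq]
      rw [Real.sqrt_sq hs.le]
      field_simp
      linear_combination (-4) * hε
    simp only [gI, hr, Pi.add_apply, Pi.inv_apply]
    rw [he]
    generalize Real.exp (-ε * θ) = A
    generalize Real.exp (-x * θ ^ 2) = B
    generalize Real.exp (-1 / (4 * x)) = C
    set s := Real.sqrt x
    rw [← hsq]
    field_simp
    ring
  · filter_upwards with y
    simp [div_eq_mul_inv]

lemma base_int {θ : ℝ} (hθ : 0 < θ) (ε : ℝ) (hε : ε ^ 2 = 1) {a b : ℝ}
    (h0 : Tendsto (fun x => gPhi (θ * Real.sqrt x + ε / (2 * Real.sqrt x))) (𝓝[>] 0) (𝓝 a))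
    (ht : Tendsto (fun x => gPhi (θ * Real.sqrt x + ε / (2 * Real.sqrt x))) atTop (𝓝 b)) :
    Real.exp (-ε * θ) * Real.sqrt Real.pi * (θ * (∫ x in Set.Ioi (0 : ℝ), gI θ 1 x)
      - ε / 2 * (∫ x in Set.Ioi (0 : ℝ), gI θ 0 x)) = b - a := by
  have i1 := (gI_int hθ 1).const_mul θ
  have i0 := (gI_int hθ 0).const_mul (ε / 2)
  have h := ftc_Ioi (fun x hx => base_deriv θ ε hε hx) ((i1.sub i0).const_mul _) h0 ht
  rw [integral_const_mul, integral_sub i1 i0, integral_const_mul, integral_const_mul] at h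
  exact h

lemma arg_top {θ : ℝ} (hθ : 0 < θ) (ε : ℝ) :
    Tendsto (fun x => θ * Real.sqrt x + ε / (2 * Real.sqrt x)) atTop atTop := by
  have h1 : Tendsto (fun x => θ * Real.sqrt x) atTop atTop :=
    Real.tendsto_sqrt_atTop.const_mul_atTop hθ
  have h2 : Tendsto (fun x => ε / (2 * Real.sqrt x)) atTop (𝓝 0) :=
    (Real.tendsto_sqrt_atTop.const_mul_atTop two_pos).const_div_atTop ε
  exact h1.atTop_add h2

lemma sqrt_zero_right : Tendsto Real.sqrt (𝓝[>] 0) (𝓝[>] 0) := by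
  apply tendsto_nhdsWithin_of_tendsto_nhds_of_eventually_within
  · have := Real.continuous_sqrt.tendsto 0
    rw [Real.sqrt_zero] at this
    exact this.mono_left nhdsWithin_le_nhds
  · filter_upwards [self_mem_nhdsWithin] with x hx
    exact Real.sqrt_pos.mpr hx

lemma arg_zero_pos (θ : ℝ) :
    Tendsto (fun x => θ * Real.sqrt x + 1 / (2 * Real.sqrt x)) (𝓝[>] 0) atTop := by
  have h1 : Tendsto (fun x => θ * Real.sqrt x) (𝓝[>] 0) (𝓝 (θ * 0)) :=
    (sqrt_zero_right.mono_right nhdsWithin_le_nhds).const_mul θ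
  have h2 : Tendsto (fun x => (1 / 2) * (Real.sqrt x)⁻¹) (𝓝[>] 0) atTop :=
    (tendsto_inv_nhdsGT_zero.comp sqrt_zero_right).const_mul_atTop (by norm_num)
  refine (h1.add_atTop h2).congr ?_
  intro x
  rw [one_div, one_div, mul_inv]

lemma arg_zero_neg (θ : ℝ) :
    Tendsto (fun x => θ * Real.sqrt x + (-1) / (2 * Real.sqrt x)) (𝓝[>] 0) atBot := by
  have h := tendsto_neg_atTop_atBot.comp (arg_zero_pos (-θ))
  refine h.congr ?_
  intro x
  simp only [Function.comp]
  ring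

lemma base_vals {θ : ℝ} (hθ : 0 < θ) :
    (∫ x in Set.Ioi (0 : ℝ), gI θ 0 x) = Real.exp (-θ) ∧
    θ * (∫ x in Set.Ioi (0 : ℝ), gI θ 1 x) = Real.exp (-θ) / 2 := by
  have hA := base_int hθ 1 (by norm_num) (gPhi_top.comp (arg_zero_pos θ))
    (gPhi_top.comp (arg_top hθ 1))
  have hB := base_int hθ (-1) (by norm_num) (gPhi_bot.comp (arg_zero_neg θ))
    (gPhi_top.comp (arg_top hθ (-1)))
  rw [gPhi_tot] at hB
  have hpi : Real.sqrt Real.pi ≠ 0 := by positivity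
  have he : Real.exp (-1 * θ) * Real.sqrt Real.pi ≠ 0 := by positivity
  rw [sub_self, mul_eq_zero] at hA
  have hA' := hA.resolve_left he
  have hB' : Real.exp θ * (θ * (∫ x in Set.Ioi (0 : ℝ), gI θ 1 x)
      + 1 / 2 * (∫ x in Set.Ioi (0 : ℝ), gI θ 0 x)) = 1 := by
    apply mul_right_cancel₀ hpi
    rw [neg_neg, one_mul] at hB
    linear_combination hB
  have hE : Real.exp (-θ) * Real.exp θ = 1 := by
    rw [← Real.exp_add]; simp
  have hC : (θ * (∫ x in Set.Ioi (0 : ℝ), gI θ 1 x)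
      + 1 / 2 * (∫ x in Set.Ioi (0 : ℝ), gI θ 0 x)) = Real.exp (-θ) := by
    linear_combination Real.exp (-θ) * hB' - (θ * (∫ x in Set.Ioi (0 : ℝ), gI θ 1 x)
      + 1 / 2 * (∫ x in Set.Ioi (0 : ℝ), gI θ 0 x)) * hE
  constructor <;> linarith

lemma main_aux {θ : ℝ} (hθ : 0 < θ) (m : ℕ) :
    genP θ m = Real.exp θ * θ ^ (2 * m) * (∫ x in Set.Ioi (0 : ℝ), gI θ m x) ∧
    genP θ (m + 1) = Real.exp θ * θ ^ (2 * (m + 1)) * (∫ x in Set.Ioi (0 : ℝ), gI θ (m + 1) x) := by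
  have hE : Real.exp θ * Real.exp (-θ) = 1 := by
    rw [← Real.exp_add]; simp
  induction m with
  | zero =>
    obtain ⟨h0, h1⟩ := base_vals hθ
    rw [zero_add, genP_zero, genP_one]
    constructor
    · rw [h0]
      linear_combination -hE
    · linear_combination (-(θ / 2)) * hE - Real.exp θ * θ * h1
  | succ m ih =>
    refine ⟨ih.2, ?_⟩
    have h := gI_rec hθ m
    rw [genP_rec, ih.1, ih.2]
    linear_combination (-(Real.exp θ * θ ^ (2 * m + 2))) * h

/-- Generating identity for generalized factorial coefficients with `σ = 1/2`:
`∑_{k=1}^m C(m,k;1/2) θ^k = e^θ θ^{2m} ∫_0^∞ x^m e^{−xθ²} f_{1/2}(x) dx`. -/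
theorem stmt13 (m : ℕ) (hm : 1 ≤ m) (θ : ℝ) (hθ : 0 < θ) :
    ∑ k ∈ Finset.Icc 1 m, genFactCoeff m k (1 / 2) * θ ^ k
      = Real.exp θ * θ ^ (2 * m) *
        ∫ x in Set.Ioi (0 : ℝ),
          x ^ m * Real.exp (-x * θ ^ 2) *
            ((1 / (2 * Real.sqrt Real.pi)) * x ^ (-(3 / 2) : ℝ) * Real.exp (-1 / (4 * x))) := by
  have h := (main_aux hθ m).1
  unfold gI at h
  rw [← h, genP]
  obtain ⟨n, rfl⟩ : ∃ n, m = n + 1 := ⟨m - 1, by omega⟩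
  apply Finset.sum_subset
  · intro x hx
    simp only [Finset.mem_range, Finset.mem_Icc] at *
    omega
  · intro x hx hx'
    simp only [Finset.mem_range, Finset.mem_Icc] at *
    have : x = 0 := by omega
    rw [this, gfc_succ_zero, zero_mul]
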